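/- Let φ = (1+√5)/2. Consider any instance of the Drones Warehouse Problem with n parcels of distances ℓ_1, …, ℓ_n > 0 and m drones with speeds v_1, …, v_m > 0 and battery lives d_1, …, d_m > 0, such that some drone can deliver every parcel (equivalently, max_i d_i ≥ max_j ℓ_j). Then the LPT heuristic produces a valid schedule whose makespan is at most φ times the minimum makespan over all valid schedules. -/

import Mathlib

/-!
STATEMENT 0: The LPT heuristic for the Drones Warehouse Problem is a
φ-approximation, where φ = (1+√5)/2 is the golden ratio.

A DWP instance has `n` parcels with positive distances `ℓ j`, and `m` drones
with positive speeds `v i` and positive battery lives `d i`.  A schedule is a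
function `g : Fin n → Fin m` assigning each parcel to a drone (this encodes a
partition of the parcels among the drones); it is valid if `ℓ j ≤ d (g j)` for
all `j`.  The makespan is `max_i (∑_{j : g j = i} ℓ j) / v i`.

The LPT heuristic processes the parcels in non-increasing order of distance
(the parcels are assumed sorted, so in the order `0, 1, …, n-1`) and assigns
each parcel to an eligible drone (one whose battery suffices) minimizing the
resulting completion time.  `IsLPT` characterizes exactly the schedules that
can be produced by such a run (for some tie-break).
-/

open Finset

/-- Total distance assigned by `g` to drone `i` among parcels with index `< k`,
i.e. the parcels processed before parcel `k`. -/
def loadBefore {n m : ℕ} (ℓ : Fin n → ℝ) (g : Fin n → Fin m)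
    (k : Fin n) (i : Fin m) : ℝ :=
  ∑ j ∈ Finset.univ.filter (fun j => j < k ∧ g j = i), ℓ j

/-- `g` is a possible run of the LPT heuristic on the DWP instance `(ℓ, v, d)`
(parcels sorted in non-increasing order of distance): each parcel `k` is
assigned to an eligible drone on which it would be completed earliest. -/
def IsLPT {n m : ℕ} (ℓ : Fin n → ℝ) (v d : Fin m → ℝ) (g : Fin n → Fin m) : Prop :=
  ∀ k : Fin n, ℓ k ≤ d (g k) ∧
    ∀ i : Fin m, ℓ k ≤ d i →
      (loadBefore ℓ g k (g k) + ℓ k) / v (g k) ≤ (loadBefore ℓ g k i + ℓ k) / v i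

/-- A schedule is valid if every parcel is assigned to a drone whose battery
life suffices to deliver it. -/
def ValidSchedule {n m : ℕ} (ℓ : Fin n → ℝ) (d : Fin m → ℝ)
    (g : Fin n → Fin m) : Prop :=
  ∀ j, ℓ j ≤ d (g j)

/-- The makespan of a schedule: the maximum over drones of the total assigned
distance divided by the drone's speed. -/
noncomputable def makespan {n m : ℕ} (hm : 0 < m) (ℓ : Fin n → ℝ)
    (v : Fin m → ℝ) (g : Fin n → Fin m) : ℝ :=
  Finset.univ.sup' (Finset.univ_nonempty_iff.mpr ⟨⟨0, hm⟩⟩)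
    (fun i => (∑ j ∈ Finset.univ.filter (fun j => g j = i), ℓ j) / v i)

/-- A superadditive integer weight function, used to compare LPT with an optimal schedule. -/
noncomputable def wt (x : ℝ) : ℤ := ⌊x⌋ + ⌊x + (3 - Real.sqrt 5) / 2⌋

lemma sqrt5_bounds : Real.sqrt 5 * Real.sqrt 5 = 5 ∧ (2.236 : ℝ) < Real.sqrt 5 ∧
    Real.sqrt 5 < 2.2361 := by
  refine ⟨Real.mul_self_sqrt (by norm_num), ?_, ?_⟩
  · apply Real.lt_sqrt_of_sq_lt; norm_num
  · rw [Real.sqrt_lt' (by norm_num)]; norm_num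

lemma wt_cases (x : ℝ) : ∃ a : ℤ, (a : ℝ) ≤ x ∧ x < a + 1 ∧
    ((x < a + (Real.sqrt 5 - 1) / 2 ∧ wt x = 2 * a) ∨
     ((a : ℝ) + (Real.sqrt 5 - 1) / 2 ≤ x ∧ wt x = 2 * a + 1)) := by
  obtain ⟨-, h1, h2⟩ := sqrt5_bounds
  have hl := Int.floor_le x
  have hu := Int.lt_floor_add_one x
  refine ⟨⌊x⌋, hl, hu, ?_⟩
  by_cases h : x < ⌊x⌋ + (Real.sqrt 5 - 1) / 2
  · left
    refine ⟨h, ?_⟩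
    have : ⌊x + (3 - Real.sqrt 5) / 2⌋ = ⌊x⌋ := by
      rw [Int.floor_eq_iff]; constructor <;> linarith
    unfold wt; omega
  · right
    push Not at h
    refine ⟨h, ?_⟩
    have : ⌊x + (3 - Real.sqrt 5) / 2⌋ = ⌊x⌋ + 1 := by
      rw [Int.floor_eq_iff]; push_cast; constructor <;> linarith
    unfold wt; omega

lemma wt_mono {x y : ℝ} (h : x ≤ y) : wt x ≤ wt y := by
  unfold wt
  gcongr

lemma wt_zero : wt 0 = 0 := by
  obtain ⟨-, h1, h2⟩ := sqrt5_bounds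
  have : ⌊(0 : ℝ) + (3 - Real.sqrt 5) / 2⌋ = 0 := by
    rw [Int.floor_eq_iff]; push_cast; constructor <;> linarith
  unfold wt; rw [this]; simp

lemma wt_one : wt 1 = 2 := by
  obtain ⟨-, h1, h2⟩ := sqrt5_bounds
  have : ⌊(1 : ℝ) + (3 - Real.sqrt 5) / 2⌋ = 1 := by
    rw [Int.floor_eq_iff]; push_cast; constructor <;> linarith
  unfold wt; rw [this]; simp

lemma wt_add (x y : ℝ) : wt x + wt y ≤ wt (x + y) := by
  obtain ⟨-, h1, h2⟩ := sqrt5_bounds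
  have e1 := Int.floor_le x
  have e2 := Int.floor_le y
  obtain ⟨a, ha, ha', hx⟩ := wt_cases x
  obtain ⟨b, hb, hb', hy⟩ := wt_cases y
  have key : ∀ s : ℤ, (s : ℝ) ≤ x + y → s ≤ ⌊x + y⌋ := fun s hs => Int.le_floor.2 hs
  have key2 : ∀ s : ℤ, (s : ℝ) ≤ x + y + (3 - Real.sqrt 5) / 2 →
      s ≤ ⌊x + y + (3 - Real.sqrt 5) / 2⌋ := fun s hs => Int.le_floor.2 hs
  have hW : wt (x + y) = ⌊x + y⌋ + ⌊x + y + (3 - Real.sqrt 5) / 2⌋ := rfl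
  rcases hx with ⟨hx, hx'⟩ | ⟨hx, hx'⟩ <;> rcases hy with ⟨hy, hy'⟩ | ⟨hy, hy'⟩
  · have := key (a + b) (by push_cast; linarith)
    have := key2 (a + b) (by push_cast; linarith)
    omega
  · have := key (a + b) (by push_cast; linarith)
    have := key2 (a + b + 1) (by push_cast; linarith)
    omega
  · have := key (a + b) (by push_cast; linarith)
    have := key2 (a + b + 1) (by push_cast; linarith)
    omega
  · have := key (a + b + 1) (by push_cast; linarith)
    have := key2 (a + b + 1) (by push_cast; linarith)
    omega

lemma wt_sum {ι : Type*} (s : Finset ι) (q : ι → ℝ) :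
    ∑ j ∈ s, wt (q j) ≤ wt (∑ j ∈ s, q j) := by
  classical
  induction s using Finset.induction_on with
  | empty => simp [wt_zero]
  | insert a s ha ih =>
    rw [Finset.sum_insert ha, Finset.sum_insert ha]
    have := wt_add (q a) (∑ j ∈ s, q j)
    omega

lemma wt_le (x : ℝ) : (wt x : ℝ) ≤ 2 * x := by
  obtain ⟨-, h1, h2⟩ := sqrt5_bounds
  obtain ⟨a, ha, ha', ⟨hx, hx'⟩ | ⟨hx, hx'⟩⟩ := wt_cases x <;>
  · rw [hx']; push_cast; linarith

lemma wt_big {q : ℝ} (h : (1 + Real.sqrt 5) / 2 ≤ q) :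
    (Real.sqrt 5 - 1) * q + (Real.sqrt 5 - 2) ≤ wt q := by
  obtain ⟨h0, h1, h2⟩ := sqrt5_bounds
  by_cases hq : q < 2
  · obtain ⟨a, ha, ha', hx⟩ := wt_cases q
    have : a = 1 := by
      have h3 : (a : ℝ) < 2 := by linarith
      have h4 : (0 : ℝ) < a := by linarith
      norm_cast at h3 h4; omega
    subst this
    rcases hx with ⟨hx, hx'⟩ | ⟨hx, hx'⟩
    · push_cast at hx; linarith
    · rw [hx']; push_cast; nlinarith
  · push Not at hq
    obtain ⟨a, ha, ha', ⟨hx, hx'⟩ | ⟨hx, hx'⟩⟩ := wt_cases q <;>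
    · rw [hx']; push_cast; nlinarith

lemma wt_ge_two {q : ℝ} (h : 1 ≤ q) : 2 ≤ wt q := by
  have := wt_mono h
  rwa [wt_one] at this

lemma wt_all {q : ℝ} (h : 1 ≤ q) : (Real.sqrt 5 - 1) * q ≤ wt q := by
  obtain ⟨h0, h1, h2⟩ := sqrt5_bounds
  by_cases hq : q < (1 + Real.sqrt 5) / 2
  · have : (2 : ℝ) ≤ wt q := by exact_mod_cast wt_ge_two h
    nlinarith
  · push Not at hq
    linarith [wt_big hq]

/-- A heavily loaded drone carries at least the weight of its capacity. -/
lemma wt_lpt {ι : Type*} (s : Finset ι) (q : ι → ℝ) (V : ℝ)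
    (hq : ∀ j ∈ s, 1 ≤ q j) (hs : (1 + Real.sqrt 5) / 2 * V - 1 < ∑ j ∈ s, q j) :
    wt V ≤ ∑ j ∈ s, wt (q j) := by
  classical
  obtain ⟨h0, h1, h2⟩ := sqrt5_bounds
  by_cases hall : ∀ j ∈ s, q j < (1 + Real.sqrt 5) / 2
  · have hN : ∑ j ∈ s, q j ≤ s.card * ((1 + Real.sqrt 5) / 2) := by
      have := Finset.sum_le_card_nsmul s q _ (fun j hj => (hall j hj).le)
      simpa using this
    have hV : V < s.card + (Real.sqrt 5 - 1) / 2 := by nlinarith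
    have hw : (2 : ℤ) * s.card ≤ ∑ j ∈ s, wt (q j) := by
      have := Finset.card_nsmul_le_sum s (fun j => wt (q j)) 2 (fun j hj => wt_ge_two (hq j hj))
      simp at this; linarith
    refine le_trans ?_ hw
    have f1 : ⌊V⌋ < (s.card : ℤ) + 1 := by
      rw [Int.floor_lt]; push_cast; linarith
    have f2 : ⌊V + (3 - Real.sqrt 5) / 2⌋ < (s.card : ℤ) + 1 := by
      rw [Int.floor_lt]; push_cast; linarith
    unfold wt; omega
  · push Not at hall
    obtain ⟨j, hj, hjq⟩ := hall
    have e1 := wt_big hjq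
    have e2 : (Real.sqrt 5 - 1) * ∑ x ∈ s.erase j, q x ≤ ∑ x ∈ s.erase j, (wt (q x) : ℝ) := by
      rw [Finset.mul_sum]
      exact Finset.sum_le_sum fun x hx => wt_all (hq x (Finset.mem_of_mem_erase hx))
    have e3 := Finset.add_sum_erase s q hj
    have e4 := Finset.add_sum_erase s (fun x => (wt (q x) : ℝ)) hj
    have e5 := wt_le V
    have e6 : 2 * V - 1 < ∑ x ∈ s, (wt (q x) : ℝ) := by
      rw [← e4]
      rw [← e3] at hs
      have hm1 := mul_lt_mul_of_pos_left hs (show (0 : ℝ) < Real.sqrt 5 - 1 by linarith)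
      have hm2 : (Real.sqrt 5 - 1) * ((1 + Real.sqrt 5) / 2 * V - 1) =
          2 * V - (Real.sqrt 5 - 1) := by
        linear_combination (V / 2) * h0
      rw [hm2, mul_add] at hm1
      linarith
    have e7 : (wt V : ℝ) - 1 < ((∑ x ∈ s, wt (q x) : ℤ) : ℝ) := by push_cast; linarith
    have e8 : wt V - 1 < ∑ x ∈ s, wt (q x) := by exact_mod_cast e7
    omega

lemma loadBefore_congr {n m : ℕ} (ℓ : Fin n → ℝ) (g g' : Fin n → Fin m) (k : Fin n) (i : Fin m)
    (h : ∀ j < k, g j = g' j) : loadBefore ℓ g k i = loadBefore ℓ g' k i := by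
  unfold loadBefore
  congr 1
  ext j
  simp only [Finset.mem_filter, Finset.mem_univ, true_and]
  constructor
  · rintro ⟨a, b⟩; exact ⟨a, by rw [← h j a]; exact b⟩
  · rintro ⟨a, b⟩; exact ⟨a, by rw [h j a]; exact b⟩

lemma exists_lpt (n m : ℕ) (ℓ : Fin n → ℝ) (v d : Fin m → ℝ)
    (hfeas : ∃ i : Fin m, ∀ j : Fin n, ℓ j ≤ d i) :
    ∃ g : Fin n → Fin m, IsLPT ℓ v d g := by
  obtain ⟨i0, hi0⟩ := hfeas
  have main : ∀ p : ℕ, ∃ g : Fin n → Fin m, ∀ k : Fin n, k.val < p → (ℓ k ≤ d (g k) ∧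
    ∀ i : Fin m, ℓ k ≤ d i →
      (loadBefore ℓ g k (g k) + ℓ k) / v (g k) ≤ (loadBefore ℓ g k i + ℓ k) / v i) := by
    intro p
    induction p with
    | zero => exact ⟨fun _ => i0, fun k hk => absurd hk (by omega)⟩
    | succ p ih =>
      obtain ⟨g, hg⟩ := ih
      by_cases hp : p < n
      · obtain ⟨b, hb, hbm⟩ := Finset.exists_min_image
          (Finset.univ.filter fun i => ℓ ⟨p, hp⟩ ≤ d i)
          (fun i => (loadBefore ℓ g ⟨p, hp⟩ i + ℓ ⟨p, hp⟩) / v i)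
          ⟨i0, by simpa using hi0 _⟩
        simp only [Finset.mem_filter, Finset.mem_univ, true_and] at hb hbm
        have hc : ∀ k : Fin n, k.val ≤ p → ∀ i,
            loadBefore ℓ (Function.update g ⟨p, hp⟩ b) k i = loadBefore ℓ g k i := by
          intro k hk i
          apply loadBefore_congr
          intro j hj
          rw [Function.update_of_ne]
          rintro rfl
          rw [Fin.lt_def] at hj
          simp at hj; omega
        refine ⟨Function.update g ⟨p, hp⟩ b, fun k hk => ?_⟩
        by_cases hkp : k = ⟨p, hp⟩
        · subst hkp
          rw [Function.update_self]
          refine ⟨hb, fun i hi => ?_⟩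
          rw [hc _ le_rfl, hc _ le_rfl]
          exact hbm i hi
        · have hkv : k.val < p := by
            have : k.val ≠ p := fun h => hkp (Fin.ext h)
            omega
          rw [Function.update_of_ne hkp]
          refine ⟨(hg k hkv).1, fun i hi => ?_⟩
          rw [hc _ hkv.le, hc _ hkv.le]
          exact (hg k hkv).2 i hi
      · exact ⟨g, fun k _ => hg k (by omega)⟩
  obtain ⟨g, hg⟩ := main n
  exact ⟨g, fun k => hg k k.isLt⟩

/-- The completion time of each parcel under LPT is at most `φ T` when a valid
schedule finishes by time `T`. -/
lemma lpt_parcel {n m : ℕ} (ℓ : Fin n → ℝ) (v d : Fin m → ℝ)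
    (hℓ : ∀ j, 0 < ℓ j) (hv : ∀ i, 0 < v i)
    (hsorted : ∀ j k : Fin n, j ≤ k → ℓ k ≤ ℓ j)
    (g g' : Fin n → Fin m) (hg : IsLPT ℓ v d g) (hg' : ValidSchedule ℓ d g') (T : ℝ)
    (hT : ∀ i, (∑ j ∈ Finset.univ.filter (fun j => g' j = i), ℓ j) / v i ≤ T) (k : Fin n) :
    (loadBefore ℓ g k (g k) + ℓ k) / v (g k) ≤ (1 + Real.sqrt 5) / 2 * T := by
  by_contra hcon
  push Not at hcon
  have ht := hℓ k
  -- compare weights drone by drone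
  have hi : ∀ i : Fin m,
      ∑ j ∈ (Finset.univ.filter (fun j => j ≤ k)).filter (fun j => g' j = i), wt (ℓ j / ℓ k) ≤
      ∑ j ∈ (Finset.univ.filter (fun j => j < k)).filter (fun j => g j = i), wt (ℓ j / ℓ k) := by
    intro i
    by_cases hel : ℓ k ≤ d i
    · have hlt := lt_of_lt_of_le hcon ((hg k).2 i hel)
      rw [lt_div_iff₀ (hv i)] at hlt
      have hTi := hT i
      rw [div_le_iff₀ (hv i)] at hTi
      have hA : wt (T * v i / ℓ k) ≤
          ∑ j ∈ (Finset.univ.filter (fun j => j < k)).filter (fun j => g j = i),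
            wt (ℓ j / ℓ k) := by
        apply wt_lpt
        · intro j hj
          simp only [Finset.mem_filter, Finset.mem_univ, true_and] at hj
          rw [le_div_iff₀ ht, one_mul]
          exact hsorted j k hj.1.le
        · rw [← Finset.sum_div, lt_div_iff₀ ht, Finset.filter_filter]
          unfold loadBefore at hlt
          have : ((1 + Real.sqrt 5) / 2 * (T * v i / ℓ k) - 1) * ℓ k =
            (1 + Real.sqrt 5) / 2 * T * v i - ℓ k := by
            field_simp
          rw [this]
          linarith
      refine le_trans (le_trans (wt_sum _ _) (wt_mono ?_)) hA
      rw [← Finset.sum_div]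
      apply div_le_div_of_nonneg_right _ ht.le
      refine le_trans ?_ hTi
      apply Finset.sum_le_sum_of_subset_of_nonneg
      · intro j hj
        simp only [Finset.mem_filter, Finset.mem_univ, true_and] at hj ⊢
        exact hj.2
      · intro j _ _
        exact (hℓ j).le
    · have : (Finset.univ.filter (fun j => j ≤ k)).filter (fun j => g' j = i) = ∅ := by
        ext j
        simp only [Finset.mem_filter, Finset.mem_univ, true_and, Finset.notMem_empty, iff_false]
        rintro ⟨hj, rfl⟩
        exact hel (le_trans (hsorted j k hj) (hg' j))
      rw [this, Finset.sum_empty]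
      apply Finset.sum_nonneg
      intro j hj
      simp only [Finset.mem_filter, Finset.mem_univ, true_and] at hj
      have : 1 ≤ ℓ j / ℓ k := by
        rw [le_div_iff₀ ht, one_mul]
        exact hsorted j k hj.1.le
      have := wt_ge_two this
      omega
  have hsum := Finset.sum_le_sum fun i (_ : i ∈ (Finset.univ : Finset (Fin m))) => hi i
  rw [Finset.sum_fiberwise, Finset.sum_fiberwise] at hsum
  have hins : (Finset.univ.filter (fun j => j ≤ k)) =
      insert k (Finset.univ.filter (fun j => j < k)) := by
    ext j
    simp [le_iff_eq_or_lt]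
  rw [hins, Finset.sum_insert (by simp), div_self ht.ne', wt_one] at hsum
  omega

/-- **LPT is a φ-approximation for DWP.**  If some drone can deliver every
parcel, then the LPT heuristic produces a valid schedule (some run exists, and
every run is valid) whose makespan is at most `φ = (1+√5)/2` times the makespan
of any valid schedule, hence at most `φ` times the minimum makespan. -/
theorem lpt_dwp_phi_approx (n m : ℕ) (hm : 0 < m)
    (ℓ : Fin n → ℝ) (v d : Fin m → ℝ)
    (hℓ : ∀ j, 0 < ℓ j) (hv : ∀ i, 0 < v i) (hd : ∀ i, 0 < d i)
    (hsorted : ∀ j k : Fin n, j ≤ k → ℓ k ≤ ℓ j)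
    (hfeas : ∃ i : Fin m, ∀ j : Fin n, ℓ j ≤ d i) :
    (∃ g : Fin n → Fin m, IsLPT ℓ v d g) ∧
    ∀ g : Fin n → Fin m, IsLPT ℓ v d g →
      ValidSchedule ℓ d g ∧
      ∀ g' : Fin n → Fin m, ValidSchedule ℓ d g' →
        makespan hm ℓ v g ≤ (1 + Real.sqrt 5) / 2 * makespan hm ℓ v g' := by
  refine ⟨exists_lpt n m ℓ v d hfeas, fun g hg => ⟨fun j => (hg j).1, fun g' hg' => ?_⟩⟩
  have hT : ∀ i, (∑ j ∈ Finset.univ.filter (fun j => g' j = i), ℓ j) / v i ≤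
      makespan hm ℓ v g' := by
    intro i
    unfold makespan
    exact Finset.le_sup' (fun i => (∑ j ∈ Finset.univ.filter (fun j => g' j = i), ℓ j) / v i)
      (Finset.mem_univ i)
  have hT0 : 0 ≤ makespan hm ℓ v g' :=
    le_trans (div_nonneg (Finset.sum_nonneg fun j _ => (hℓ j).le) (hv ⟨0, hm⟩).le) (hT ⟨0, hm⟩)
  conv_lhs => unfold makespan
  apply Finset.sup'_le
  intro i _
  by_cases hne : (Finset.univ.filter (fun j => g j = i)).Nonempty
  · obtain ⟨k, hk, hmax⟩ := Finset.exists_max_image _ (fun j : Fin n => j) hne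
    simp only [Finset.mem_filter, Finset.mem_univ, true_and] at hk hmax
    have key := lpt_parcel ℓ v d hℓ hv hsorted g g' hg hg' _ hT k
    have hins : (Finset.univ.filter (fun j => g j = i)) =
        insert k (Finset.univ.filter (fun j => j < k ∧ g j = i)) := by
      ext j
      simp only [Finset.mem_filter, Finset.mem_univ, true_and, Finset.mem_insert]
      constructor
      · intro hj
        rcases (hmax j hj).eq_or_lt with h | h
        · exact Or.inl h
        · exact Or.inr ⟨h, hj⟩
      · rintro (h | h)
        · rw [h]; exact hk
        · exact h.2
    rw [hins, Finset.sum_insert (by simp), add_comm]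
    rw [hk] at key
    exact key
  · rw [Finset.not_nonempty_iff_eq_empty] at hne
    rw [hne, Finset.sum_empty, zero_div]
    positivity
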